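/- arXiv:2401.01135 — 4 statements merged into one kernel-verified Lean document; each statement's English description precedes it below -/
import Mathlib

section
/- Let q > 2 be a prime power, m ≥ 2 an integer, t a positive divisor of m, and N a positive integer such that x^N lies in the subfield F_{q^t} of F_{q^m} for every x ∈ F_{q^m}. Let D = {x ∈ F_{q^m} : Tr_{q^t/q}(x^N) = 0}, where Tr_{q^t/q} : F_{q^t} → F_q is the trace map, and assume D contains a nonzero element. Then the augmented code \overline{C_D} is a locally recoverable code with locality 2, and the minimum distance of the dual code \overline{C_D}^⊥ equals 3. -/
open scoped Classical

noncomputable section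

/-- The augmented code `\overline{C_D}` of the defining set `D = {x : K // P x}`:
codewords are `(Tr_{K/F}(b d) + c)_{d ∈ D}` for `b ∈ K`, `c ∈ F`. -/
def augCode (F K : Type*) [Field F] [Field K] [Algebra F K] (P : K → Prop) :
    Set ({x : K // P x} → F) :=
  {w | ∃ b : K, ∃ c : F, ∀ d : {x : K // P x}, w d = Algebra.trace F K (b * d.1) + c}

/-- The dual code under the standard inner product. -/
def dualCode {ι F : Type*} [Fintype ι] [CommRing F] (C : Set (ι → F)) : Set (ι → F) :=
  {u | ∀ v ∈ C, ∑ i, u i * v i = 0}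

/-- `d` is the minimum distance of the code `C`: the smallest Hamming weight of a
nonzero codeword. -/
def IsMinDist {ι F : Type*} [Fintype ι] [CommRing F] (C : Set (ι → F)) (d : ℕ) : Prop :=
  (∃ c ∈ C, c ≠ 0 ∧ hammingNorm c = d) ∧ ∀ c ∈ C, c ≠ 0 → d ≤ hammingNorm c

/-- The code `C` has locality `r`. -/
def HasLocality {ι F : Type*} [Fintype ι] (C : Set (ι → F)) (r : ℕ) : Prop :=
  ∀ i : ι, ∃ R : Finset ι, R.card = r ∧ i ∉ R ∧
    ∀ c₁ ∈ C, ∀ c₂ ∈ C, (∀ j ∈ R, c₁ j = c₂ j) → c₁ i = c₂ i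

/-!
A word `u` in the dual of the augmented code is an affine dependence among the points of `D`:
pairing with constants gives `∑ u_d = 0`, and nondegeneracy of the trace form gives
`∑ u_d d = 0`. Distinct points are never dependent in pairs, so nonzero dual words have weight at
least 3, while three points on an `F_q`-line carry a dual word of weight exactly 3. Since `D` is
stable under `F_q`-scalars and `q > 2`, every point of `D` lies on such a triple `0, x, l x`;
solving the resulting relation for one coordinate recovers it from the other two.
-/

section Codes

variable {ι F : Type*} [Fintype ι] [CommRing F] {C : Set (ι → F)}

theorem hasLocality_of_dualCode_weight [NoZeroDivisors F] {r : ℕ}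
    (h : ∀ i, ∃ u ∈ dualCode C, u i ≠ 0 ∧ hammingNorm u = r + 1) : HasLocality C r := by
  intro i
  obtain ⟨u, hu, hui, hur⟩ := h i
  let S : Finset ι := {j | u j ≠ 0}
  have hiS : i ∈ S := by simpa [S] using hui
  refine ⟨S.erase i, ?_, S.notMem_erase i, fun c₁ hc₁ c₂ hc₂ hagree => ?_⟩
  · rw [Finset.card_erase_of_mem hiS]
    exact Nat.sub_eq_of_eq_add hur
  · have hdiff : ∑ j, u j * (c₁ j - c₂ j) = 0 := by
      simp only [mul_sub, Finset.sum_sub_distrib, hu c₁ hc₁, hu c₂ hc₂, sub_self]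
    have hsingle : ∀ j ≠ i, u j * (c₁ j - c₂ j) = 0 := by
      intro j hji
      by_cases huj : u j = 0
      · rw [huj, zero_mul]
      · rw [hagree j (Finset.mem_erase.2 ⟨hji, by simpa [S] using huj⟩), sub_self, mul_zero]
    rw [Fintype.sum_eq_single i hsingle] at hdiff
    exact sub_eq_zero.1 ((mul_eq_zero.1 hdiff).resolve_left hui)

theorem exists_mem_dualCode_of_lineMap {i j k : ι} (hij : i ≠ j) (hik : i ≠ k) (hjk : j ≠ k)
    {l : F} (hl0 : l ≠ 0) (hl1 : l ≠ 1)
    (hC : ∀ v ∈ C, v k = AffineMap.lineMap (v i) (v j) l) :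
    ∃ u ∈ dualCode C, u i ≠ 0 ∧ u j ≠ 0 ∧ hammingNorm u = 3 := by
  let u : ι → F := Pi.single i (1 - l) + Pi.single j l - Pi.single k 1
  have : Nontrivial F := ⟨l, 0, hl0⟩
  have hui : u i ≠ 0 := by simpa [u, hij, hik, sub_eq_zero] using hl1.symm
  have huj : u j ≠ 0 := by simpa [u, hij.symm, hjk] using hl0
  have huk : u k ≠ 0 := by simp [u, hik.symm, hjk.symm]
  have hsupp : ({x | u x ≠ 0} : Finset ι) = {i, j, k} := by
    ext x
    simp only [Finset.mem_filter_univ, Finset.mem_insert, Finset.mem_singleton]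
    refine ⟨fun hx => ?_, by rintro (rfl | rfl | rfl) <;> assumption⟩
    contrapose! hx
    simp [u, hx.1, hx.2.1, hx.2.2]
  refine ⟨u, fun v hv => ?_, hui, huj, ?_⟩
  · change u ⬝ᵥ v = 0
    simp only [u, sub_dotProduct, add_dotProduct, single_dotProduct, hC v hv,
      AffineMap.lineMap_apply_ring]
    ring
  · rw [← Finset.card_eq_three.2 ⟨i, j, k, hij, hik, hjk, rfl⟩, ← hsupp]
    rfl

end Codes

theorem three_le_hammingNorm_of_affine_dependence {ι R M : Type*} [Fintype ι] [Ring R]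
    [IsDomain R] [AddCommGroup M] [Module R M] [Module.IsTorsionFree R M] {v : ι → M}
    (hv : Function.Injective v) {u : ι → R} (hu : u ≠ 0) (hsum : ∑ i, u i = 0)
    (hsmul : ∑ i, u i • v i = 0) : 3 ≤ hammingNorm u := by
  obtain ⟨i, hi⟩ := Function.ne_iff.1 hu
  obtain ⟨j, hji, hj⟩ : ∃ j ≠ i, u j ≠ 0 := by
    by_contra! h
    exact hi (Fintype.sum_eq_single i h ▸ hsum)
  have hcentred : ∑ x, u x • (v x - v i) = 0 := by
    simp only [smul_sub, Finset.sum_sub_distrib, hsmul, ← Finset.sum_smul, hsum, zero_smul,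
      sub_self]
  obtain ⟨k, hkj, hk⟩ : ∃ k ≠ j, u k • (v k - v i) ≠ 0 := by
    by_contra! h
    rw [Fintype.sum_eq_single j h] at hcentred
    exact smul_ne_zero hj (sub_ne_zero.2 (hv.ne hji)) hcentred
  have hki : k ≠ i := by
    rintro rfl
    simp at hk
  refine Finset.two_lt_card.2 ⟨i, ?_, j, ?_, k, ?_, hji.symm, hki.symm, hkj.symm⟩
  · simpa using hi
  · simpa using hj
  · simpa using left_ne_zero_of_smul hk

section AugCode

variable {F K : Type*} [Field F] [Field K] [Algebra F K] {P : K → Prop}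

theorem apply_eq_lineMap_of_mem_augCode {v : {x : K // P x} → F} (hv : v ∈ augCode F K P)
    {i j k : {x : K // P x}} {l : F} (hk : (k : K) = AffineMap.lineMap (i : K) (j : K) l) :
    v k = AffineMap.lineMap (v i) (v j) l := by
  obtain ⟨b, c, hv⟩ := hv
  simp only [hv, hk, AffineMap.lineMap_apply_module, mul_add, mul_smul_comm, map_add, map_smul,
    smul_eq_mul]
  ring

variable [Fintype {x : K // P x}]

theorem sum_eq_zero_of_mem_dualCode_augCode {u : {x : K // P x} → F}
    (hu : u ∈ dualCode (augCode F K P)) : ∑ i, u i = 0 := by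
  simpa using hu 1 ⟨0, 1, fun d => by simp⟩

theorem sum_smul_eq_zero_of_mem_dualCode_augCode [FiniteDimensional F K]
    [Algebra.IsSeparable F K] {u : {x : K // P x} → F} (hu : u ∈ dualCode (augCode F K P)) :
    ∑ i, u i • (i : K) = 0 := by
  refine (traceForm_nondegenerate F K).1 _ fun b => ?_
  calc Algebra.traceForm F K (∑ i, u i • (i : K)) b
      = ∑ i, u i * Algebra.trace F K (b * i) := by
        simp only [map_sum, map_smul, LinearMap.sum_apply, LinearMap.smul_apply,
          Algebra.traceForm_apply, smul_eq_mul, mul_comm b]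
    _ = 0 := hu _ ⟨b, 0, fun _ => (add_zero _).symm⟩

theorem three_le_hammingNorm_of_mem_dualCode_augCode [FiniteDimensional F K]
    [Algebra.IsSeparable F K] {u : {x : K // P x} → F} (hu : u ∈ dualCode (augCode F K P))
    (hu0 : u ≠ 0) : 3 ≤ hammingNorm u :=
  three_le_hammingNorm_of_affine_dependence Subtype.val_injective hu0
    (sum_eq_zero_of_mem_dualCode_augCode hu) (sum_smul_eq_zero_of_mem_dualCode_augCode hu)

theorem exists_mem_dualCode_augCode_of_smul_mem {x : K} (hx0 : x ≠ 0) {l : F} (hl0 : l ≠ 0)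
    (hl1 : l ≠ 1) (h0 : P 0) (hx : P x) (hlx : P (l • x)) :
    ∃ u ∈ dualCode (augCode F K P), u ⟨0, h0⟩ ≠ 0 ∧ u ⟨x, hx⟩ ≠ 0 ∧ hammingNorm u = 3 := by
  have hxlx : x ≠ l • x := fun h => hl1 (smul_left_injective F hx0 (by simpa using h.symm))
  refine exists_mem_dualCode_of_lineMap (k := ⟨l • x, hlx⟩)
    (Subtype.coe_ne_coe.1 hx0.symm) (Subtype.coe_ne_coe.1 (smul_ne_zero hl0 hx0).symm)
    (Subtype.coe_ne_coe.1 hxlx) hl0 hl1 fun v hv => apply_eq_lineMap_of_mem_augCode hv ?_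
  simp [AffineMap.lineMap_apply_module]

theorem exists_mem_dualCode_augCode_hammingNorm_eq_three {l : F} (hl0 : l ≠ 0) (hl1 : l ≠ 1)
    (h0 : P 0) (hsmul : ∀ x, P x → P (l • x)) (hne : ∃ x, x ≠ 0 ∧ P x) (i : {x : K // P x}) :
    ∃ u ∈ dualCode (augCode F K P), u i ≠ 0 ∧ hammingNorm u = 3 := by
  obtain ⟨i, hi⟩ := i
  by_cases hi0 : i = 0
  · obtain ⟨x, hx0, hx⟩ := hne
    obtain ⟨u, hu, hu0, -, hu3⟩ :=
      exists_mem_dualCode_augCode_of_smul_mem hx0 hl0 hl1 h0 hx (hsmul x hx)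
    exact ⟨u, hu, by simpa only [hi0] using hu0, hu3⟩
  · obtain ⟨u, hu, -, hui, hu3⟩ :=
      exists_mem_dualCode_augCode_of_smul_mem hi0 hl0 hl1 h0 hi (hsmul i hi)
    exact ⟨u, hu, hui, hu3⟩

theorem stmt0_general [FiniteDimensional F K] [Algebra.IsSeparable F K] {l : F} (hl0 : l ≠ 0)
    (hl1 : l ≠ 1) (h0 : P 0) (hsmul : ∀ x, P x → P (l • x)) (hne : ∃ x, x ≠ 0 ∧ P x) :
    HasLocality (augCode F K P) 2 ∧ IsMinDist (dualCode (augCode F K P)) 3 := by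
  have hword := exists_mem_dualCode_augCode_hammingNorm_eq_three hl0 hl1 h0 hsmul hne
  obtain ⟨u, hu, hu0, hu3⟩ := hword ⟨0, h0⟩
  exact ⟨hasLocality_of_dualCode_weight hword,
    ⟨u, hu, Function.ne_iff.2 ⟨_, hu0⟩, hu3⟩,
    fun _ => three_le_hammingNorm_of_mem_dualCode_augCode⟩

end AugCode

section Cone

variable {F E K M : Type*} [CommSemiring F] [CommSemiring E] [Semiring K] [Algebra F E]
  [Algebra E K] [Algebra F K] [IsScalarTower F E K] [FaithfulSMul E K] {N : ℕ} {g : K → E}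

theorem map_smul_of_algebraMap_eq_pow (hg : ∀ x, algebraMap E K (g x) = x ^ N) (c : F) (x : K) :
    g (c • x) = c ^ N • g x := by
  apply FaithfulSMul.algebraMap_injective E K
  rw [hg, algebraMap.smul, hg, smul_pow]

theorem linearMap_apply_smul_eq_zero_of_algebraMap_eq_pow [AddCommMonoid M] [Module F M]
    (f : E →ₗ[F] M) (hg : ∀ x, algebraMap E K (g x) = x ^ N) (c : F) {x : K}
    (hx : f (g x) = 0) : f (g (c • x)) = 0 := by
  rw [map_smul_of_algebraMap_eq_pow hg, map_smul, hx, smul_zero]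

end Cone

theorem stmt0 (p a q m t N : ℕ) (hp : p.Prime) (ha : 0 < a) (hqpa : q = p ^ a)
    (hq2 : 2 < q) (hm : 2 ≤ m) (ht : 0 < t) (htm : t ∣ m) (hN : 0 < N)
    (Fq Ft Fm : Type) [Field Fq] [Field Ft] [Field Fm]
    [Fintype Fq] [Fintype Ft] [Fintype Fm]
    [Algebra Fq Ft] [Algebra Ft Fm] [Algebra Fq Fm] [IsScalarTower Fq Ft Fm]
    (hcq : Fintype.card Fq = q) (hct : Fintype.card Ft = q ^ t)
    (hcm : Fintype.card Fm = q ^ m)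
    (g : Fm → Ft) (hg : ∀ x : Fm, algebraMap Ft Fm (g x) = x ^ N)
    (hD : ∃ x : Fm, x ≠ 0 ∧ Algebra.trace Fq Ft (g x) = 0) :
    HasLocality (augCode Fq Fm (fun x => Algebra.trace Fq Ft (g x) = 0)) 2 ∧
      IsMinDist (dualCode (augCode Fq Fm (fun x => Algebra.trace Fq Ft (g x) = 0))) 3 := by
  obtain ⟨l, hl0, hl1⟩ : ∃ l : Fq, l ≠ 0 ∧ l ≠ 1 :=
    ENat.exists_ne_ne_of_three_le (by simpa [hcq] using mod_cast hq2) 0 1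
  have hsmul (c : Fq) (x : Fm) (hx : Algebra.trace Fq Ft (g x) = 0) :=
    linearMap_apply_smul_eq_zero_of_algebraMap_eq_pow (Algebra.trace Fq Ft) hg c hx
  have h0 : Algebra.trace Fq Ft (g 0) = 0 :=
    let ⟨x, _, hx⟩ := hD
    zero_smul Fq x ▸ hsmul 0 x hx
  exact stmt0_general hl0 hl1 h0 (hsmul l) hD
end
end

section
/- Let q be a prime power and m = 2r with r ≥ 2. Then the cardinality of D = {x ∈ F_{q^m} : Tr_{q^r/q}(x^{q^r+1}) = 0} equals q^{r−1}(q^r − q + 1); in particular the length of the augmented code \overline{C_D} is q^{r−1}(q^r − q + 1). -/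
open scoped Classical

noncomputable section

/-!
The map `x ↦ x ^ (q ^ r + 1)` is the norm of `F_{q^m} / F_{q^r}`. A norm of finite fields is
surjective, so on unit groups all its fibres have the size of its kernel, here `q ^ r + 1`.
Besides `0`, the set `D` consists of the fibres over the nonzero elements of trace zero, of which
there are `q ^ (r - 1) - 1` because the trace is a nonzero linear functional.
-/

open Function Finset Module

theorem natCard_preimage_of_surjective {G H : Type*} [Group G] [Group H] {f : G →* H}
    (hf : Surjective f) (T : Set H) : Nat.card (f ⁻¹' T) = Nat.card f.ker * Nat.card T := by
  let e := QuotientGroup.quotientKerEquivOfSurjective f hf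
  have preimage_eq : f ⁻¹' T = QuotientGroup.mk ⁻¹' (e ⁻¹' T) := rfl
  rw [preimage_eq, QuotientGroup.card_preimage_mk,
    Nat.card_preimage_of_injective e.injective (e.surjective.range_eq ▸ T.subset_univ)]

theorem map_zero_of_surjective {M N : Type*} [MulZeroOneClass M] [MulZeroOneClass N]
    {f : M →* N} (hf : Surjective f) : f 0 = 0 := by
  obtain ⟨x, hx⟩ := hf 0
  rw [← zero_mul x, map_mul, hx, mul_zero]

section GroupWithZero

variable {G₀ H₀ : Type*} [GroupWithZero G₀]

theorem natCard_units_val_preimage_add_one [Finite G₀] {S : Set G₀} (h0 : (0 : G₀) ∈ S) :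
    Nat.card ((Units.val : G₀ˣ → G₀) ⁻¹' S) + 1 = Nat.card S := by
  have image_val : Units.val '' ((Units.val : G₀ˣ → G₀) ⁻¹' S) = S \ {0} := by
    rw [Set.image_preimage_eq_inter_range]
    ext x
    simp [← isUnit_iff_ne_zero, IsUnit]
  rw [← Nat.card_image_of_injective Units.val_injective, image_val, Nat.card_coe_set_eq,
    Nat.card_coe_set_eq, Set.ncard_sdiff_singleton_add_one h0]

variable [GroupWithZero H₀] {f : G₀ →* H₀}

theorem unitsMap_surjective_of_surjective (hf : Surjective f) : Surjective (Units.map f) := by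
  intro u
  obtain ⟨x, hx⟩ := hf u
  have hx0 : x ≠ 0 := by
    rintro rfl
    exact u.ne_zero (hx ▸ map_zero_of_surjective hf)
  exact ⟨Units.mk0 x hx0, Units.ext hx⟩

theorem natCard_preimage_of_surjective_of_zero_mem [Finite G₀] (hf : Surjective f) {S : Set H₀}
    (h0 : (0 : H₀) ∈ S) :
    Nat.card (f ⁻¹' S) = Nat.card (Units.map f).ker * (Nat.card S - 1) + 1 := by
  have : Finite H₀ := .of_surjective f hf
  have h0' : (0 : G₀) ∈ f ⁻¹' S := by rwa [Set.mem_preimage, map_zero_of_surjective hf]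
  have units_preimage : (Units.val : G₀ˣ → G₀) ⁻¹' (f ⁻¹' S) =
      Units.map f ⁻¹' (Units.val ⁻¹' S) := rfl
  rw [← natCard_units_val_preimage_add_one h0', units_preimage,
    natCard_preimage_of_surjective (unitsMap_surjective_of_surjective hf),
    ← natCard_units_val_preimage_add_one h0, Nat.add_sub_cancel]

end GroupWithZero

theorem natCard_ker_dual_of_ne_zero {K V : Type*} [Field K] [AddCommGroup V] [Module K V]
    [FiniteDimensional K V] {f : Dual K V} (hf : f ≠ 0) :
    Nat.card (LinearMap.ker f) = Nat.card K ^ (finrank K V - 1) := by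
  rw [natCard_eq_pow_finrank (K := K), ← Dual.finrank_ker_add_one_of_ne_zero hf,
    Nat.add_sub_cancel]

theorem natCard_ker_unitsMap_norm (K L : Type*) [Field K] [Field L] [Finite L] [Algebra K L] :
    Nat.card (Units.map (Algebra.norm K (S := L))).ker =
      ∑ i ∈ range (finrank K L), Nat.card K ^ i := by
  have : Finite K := .of_injective _ (algebraMap K L).injective
  have card_ker_mul : Nat.card (Units.map (Algebra.norm K (S := L))).ker * (Nat.card K - 1) =
      Nat.card K ^ finrank K L - 1 := by
    rw [← natCard_eq_pow_finrank, ← Nat.card_units, ← Nat.card_units,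
      ← (Units.map (Algebra.norm K (S := L))).ker.card_mul_index, Subgroup.index_ker,
      MonoidHom.range_eq_top.2 (FiniteField.unitsMap_norm_surjective K L), Subgroup.card_top]
  have one_lt_card : 1 < Nat.card K := Finite.one_lt_card
  rw [Nat.geomSum_eq one_lt_card, ← card_ker_mul,
    Nat.mul_div_cancel _ (Nat.sub_pos_of_lt one_lt_card)]

theorem natCard_trace_norm_eq_zero (F K L : Type*) [Field F] [Field K] [Field L] [Finite L]
    [Algebra F K] [Algebra K L] :
    Nat.card {x : L // Algebra.trace F K (Algebra.norm K x) = 0} =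
      (∑ i ∈ range (finrank K L), Nat.card K ^ i) * (Nat.card F ^ (finrank F K - 1) - 1) + 1 := by
  have : Finite K := .of_injective _ (algebraMap K L).injective
  have : Finite F := .of_injective _ (algebraMap F K).injective
  rw [← natCard_ker_unitsMap_norm, ← natCard_ker_dual_of_ne_zero (Algebra.trace_ne_zero F K)]
  exact natCard_preimage_of_surjective_of_zero_mem (FiniteField.norm_surjective K L)
    (S := LinearMap.ker (Algebra.trace F K)) (zero_mem _)

theorem finrank_eq_of_natCard_eq_pow {K V : Type*} [Field K] [Finite K] [AddCommGroup V]
    [Module K V] [Module.Finite K V] {n : ℕ} (h : Nat.card V = Nat.card K ^ n) :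
    finrank K V = n :=
  Nat.pow_right_injective Finite.one_lt_card (natCard_eq_pow_finrank.symm.trans h)

theorem stmt1_general {F K L : Type*} [Field F] [Field K] [Field L] [Finite L]
    [Algebra F K] [Algebra K L] {q r n : ℕ}
    (hF : Nat.card F = q) (hK : Nat.card K = q ^ r) (hL : Nat.card L = (q ^ r) ^ n)
    {g : L → K} (hg : ∀ x, algebraMap K L (g x) = x ^ ∑ i ∈ range n, (q ^ r) ^ i) :
    Nat.card {x : L // Algebra.trace F K (g x) = 0} =
      (∑ i ∈ range n, (q ^ r) ^ i) * (q ^ (r - 1) - 1) + 1 := by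
  have : Finite K := .of_injective _ (algebraMap K L).injective
  have : Finite F := .of_injective _ (algebraMap F K).injective
  have finrank_K : finrank F K = r := finrank_eq_of_natCard_eq_pow (by rw [hF, hK])
  have finrank_L : finrank K L = n := finrank_eq_of_natCard_eq_pow (by rw [hK, hL])
  have g_eq_norm (x : L) : g x = Algebra.norm K x := by
    apply (algebraMap K L).injective
    rw [hg, FiniteField.algebraMap_norm_eq_pow_sum, finrank_L, hK]
  simp only [g_eq_norm, natCard_trace_norm_eq_zero, finrank_K, finrank_L, hF, hK]

theorem sum_range_two_mul_pred_add_one {q r : ℕ} (hq : 0 < q) (hr : 0 < r) :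
    (∑ i ∈ range 2, (q ^ r) ^ i) * (q ^ (r - 1) - 1) + 1 = q ^ (r - 1) * (q ^ r - q + 1) := by
  obtain ⟨s, rfl⟩ := Nat.exists_eq_add_one.2 hr
  obtain ⟨k, hk⟩ := Nat.exists_eq_add_one.2 (pow_pos hq s)
  have pow_succ_sub : (k + 1) * q - q = k * q := by rw [Nat.succ_mul, Nat.add_sub_cancel]
  simp only [sum_range_succ, range_zero, sum_empty, Nat.add_sub_cancel, pow_succ, hk, pow_succ_sub]
  ring

theorem stmt1 (p a q r m : ℕ) (hp : p.Prime) (ha : 0 < a) (hqpa : q = p ^ a)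
    (hr : 2 ≤ r) (hm : m = 2 * r)
    (Fq Fr Fm : Type) [Field Fq] [Field Fr] [Field Fm]
    [Fintype Fq] [Fintype Fr] [Fintype Fm]
    [Algebra Fq Fr] [Algebra Fr Fm] [Algebra Fq Fm] [IsScalarTower Fq Fr Fm]
    (hcq : Fintype.card Fq = q) (hcr : Fintype.card Fr = q ^ r)
    (hcm : Fintype.card Fm = q ^ m)
    (g : Fm → Fr) (hg : ∀ x : Fm, algebraMap Fr Fm (g x) = x ^ (q ^ r + 1)) :
    -- the cardinality of `D`, i.e. the length of the augmented code
    -- `augCode Fq Fm (fun x => Algebra.trace Fq Fr (g x) = 0)`,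
    -- equals `q^{r-1}(q^r - q + 1)`
    Fintype.card {x : Fm // Algebra.trace Fq Fr (g x) = 0}
      = q ^ (r - 1) * (q ^ r - q + 1) := by
  rw [Fintype.card_eq_nat_card] at hcq hcr hcm ⊢
  rw [stmt1_general hcq hcr (n := 2) (by rw [hcm, hm, mul_comm, pow_mul])
    (by simpa [sum_range_succ, add_comm] using hg)]
  exact sum_range_two_mul_pred_add_one (hcq ▸ Nat.card_pos) (by lia)
end
end

section
/- Let q be a prime power, m = 2r with r a positive integer, s ∈ F_q^* and b ∈ F_{q^m}^*. Let N_s denote the number of x ∈ F_{q^m} satisfying both Tr_{q^m/q}(bx) = s and Tr_{q^r/q}(x^{q^r+1}) = 0. Then N_s = q^{m−2} if Tr_{q^r/q}(b^{q^r+1}) = 0, and N_s = q^{m−2} − q^{r−1} if Tr_{q^r/q}(b^{q^r+1}) ≠ 0. -/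
open scoped Classical

noncomputable section

/-! The map `Q = Tr ∘ N`, with `N x = x ^ (q ^ r + 1)` the norm to `F_{q^r}`, is a quadratic form
over `F_q`, and the conjugate `d` of `b` satisfies `polar Q x d = Tr (b x)` and `Q d = Q b`.
Count in two ways the pairs `(t, x)` with `Q x + t (Tr (b x) - s) = 0`. For fixed `x` there are
`q` solutions `t` if `x` is one of the `N_s` elements, none if only `Tr (b x) = s` holds, and one
otherwise. For fixed `t`, the translation `x ↦ x + t d` turns the equation into
`Q x = t (t Q b + s)`. As `Q` takes all nonzero values equally often, the second count depends only
on how many `t` annihilate the right-hand side: one if `Q b = 0`, and two otherwise. -/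

section Pencils

open Finset

variable {K : Type*} [Field K] [Fintype K]

lemma card_filter_add_mul_eq_zero (a b : K) :
    #{t : K | a + t * b = 0} = if b = 0 then if a = 0 then Fintype.card K else 0 else 1 := by
  by_cases hb : b = 0
  · by_cases ha : a = 0 <;> simp [ha, hb]
  · have hroot (t : K) : a + t * b = 0 ↔ t = -a / b := by
      rw [eq_div_iff hb, add_comm, add_eq_zero_iff_eq_neg]
    have hsingle : ({t | t = -a / b} : Finset K) = {-a / b} := by ext; simp
    simp [hroot, hb, hsingle]

lemma sum_card_filter_add_mul_eq_zero {X : Type*} [Fintype X] (f h : X → K) :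
    ∑ t : K, #{x | f x + t * h x = 0} + #{x | h x = 0} =
      Fintype.card X + Fintype.card K * #{x | h x = 0 ∧ f x = 0} := by
  have hswap : ∑ t : K, #{x | f x + t * h x = 0} = ∑ x, #{t : K | f x + t * h x = 0} :=
    sum_card_bipartiteAbove_eq_sum_card_bipartiteBelow _
  rw [hswap, ← card_univ, card_eq_sum_ones univ, card_filter, card_filter, mul_sum,
    ← sum_add_distrib, ← sum_add_distrib]
  refine sum_congr rfl fun x _ ↦ ?_
  rw [card_filter_add_mul_eq_zero]
  by_cases hh : h x = 0 <;> by_cases hf : f x = 0 <;> simp [hh, hf, add_comm]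

lemma card_filter_mul_add_eq_zero (c : K) {s : K} (hs : s ≠ 0) :
    #{t : K | t * (t * c + s) = 0} = if c = 0 then 1 else 2 := by
  by_cases hc : c = 0
  · have hsingle : ({t | t = 0} : Finset K) = {0} := by ext; simp
    simp [hc, hs, hsingle]
  · have hroots (t : K) : t * (t * c + s) = 0 ↔ t = 0 ∨ t = -s / c := by
      rw [mul_eq_zero, eq_div_iff hc, add_eq_zero_iff_eq_neg]
    have hne : 0 ≠ -s / c := (div_ne_zero (neg_ne_zero.2 hs) hc).symm
    have hpair : ({t | t = 0 ∨ t = -s / c} : Finset K) = {0, -s / c} := by ext; simp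
    simp only [hroots, hpair, card_pair hne, if_neg hc]

lemma sum_apply_eq_of_eq_off_zero {X A : Type*} [Fintype X] [Zero A] {R : A → ℤ} {w : ℤ}
    (hR : ∀ a ≠ 0, R a = w) (f : X → A) :
    ∑ x, R (f x) = Fintype.card X * w + #{x | f x = 0} * (R 0 - w) := by
  have hval (a : A) : R a = w + if a = 0 then R 0 - w else 0 := by
    by_cases ha : a = 0
    · simp [ha]
    · simp [ha, hR a ha]
  calc ∑ x, R (f x) = ∑ x, (w + if f x = 0 then R 0 - w else 0) :=
        sum_congr rfl fun x _ ↦ hval (f x)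
    _ = Fintype.card X * w + #{x | f x = 0} * (R 0 - w) := by
        simp [sum_add_distrib, ← sum_filter, mul_sub]

lemma sum_apply_mul_mul_add {R : K → ℤ} {w : ℤ} (hR : ∀ a ≠ 0, R a = w) (c : K) {s : K}
    (hs : s ≠ 0) :
    ∑ t, R (t * (t * c + s)) = ∑ a, R a + if c = 0 then 0 else R 0 - w := by
  have hsingle : ({a | a = 0} : Finset K) = {0} := by ext; simp
  rw [sum_apply_eq_of_eq_off_zero hR, card_filter_mul_add_eq_zero c hs,
    sum_apply_eq_of_eq_off_zero hR fun a ↦ a, hsingle, card_singleton]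
  split_ifs <;> push_cast <;> ring

end Pencils

section QuadraticForms

open Finset QuadraticMap

lemma card_filter_add_mul_polar_sub_eq_zero {R V : Type*} [CommRing R] [AddCommGroup V]
    [Module R V] [Fintype V] (Q : QuadraticForm R V) (d : V) (s t : R) :
    #{x | Q x + t * (polar Q x d - s) = 0} = #{x | Q x = t * (t * Q d + s)} := by
  refine card_equiv (Equiv.addRight (t • d)) fun x ↦ ?_
  have hshift : Q (x + t • d) = Q x + t * polar Q x d + t * t * Q d := by
    rw [QuadraticMap.map_add Q, QuadraticMap.map_smul, polar_smul_right, smul_eq_mul, smul_eq_mul]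
    ring
  simp only [mem_filter_univ, Equiv.coe_addRight, hshift]
  rw [← sub_eq_zero (b := t * (t * Q d + s))]
  ring_nf

theorem card_mul_card_polar_eq_and_eq_zero {K V : Type*} [Field K] [Fintype K] [AddCommGroup V]
    [Module K V] [Fintype V] (Q : QuadraticForm K V) (d : V) {w : ℤ}
    (hw : ∀ a ≠ 0, (#{x | Q x = a} : ℤ) = w) {s : K} (hs : s ≠ 0) :
    (Fintype.card K : ℤ) * #{x | polar Q x d = s ∧ Q x = 0} =
      #{x | polar Q x d = s} + if Q d = 0 then 0 else (#{x | Q x = 0} : ℤ) - w := by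
  have hpencil := sum_card_filter_add_mul_eq_zero Q fun x ↦ polar Q x d - s
  simp only [card_filter_add_mul_polar_sub_eq_zero, sub_eq_zero] at hpencil
  have hsum := sum_apply_mul_mul_add hw (Q d) hs
  have htotal : ∑ a, #{x | Q x = a} = Fintype.card V :=
    (card_eq_sum_card_fiberwise fun x _ ↦ mem_univ (Q x)).symm
  zify at hpencil htotal
  linarith

end QuadraticForms

section Fibers

open Finset

@[to_additive card_mul_card_addFiber_of_surjective]
lemma card_mul_card_fiber_of_surjective {G H : Type*} [Group G] [Group H] [Fintype G] [Fintype H]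
    {φ : G →* H} (hφ : Function.Surjective φ) (y : H) :
    Fintype.card H * #{x | φ x = y} = Fintype.card G := by
  have hfiber : ∀ z ∈ univ, #{x | φ x = z} = #{x | φ x = y} := fun z _ ↦
    MonoidHom.card_fiber_eq_of_mem_range φ (hφ z) (hφ y)
  calc Fintype.card H * #{x | φ x = y} = ∑ z, #{x | φ x = z} := by
        rw [sum_const_nat hfiber, card_univ]
    _ = Fintype.card G := (card_eq_sum_card_fiberwise fun x _ ↦ mem_univ (φ x)).symm

lemma card_mul_card_linearMap_eq {K V : Type*} [Field K] [Fintype K] [AddCommGroup V] [Module K V]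
    [Fintype V] {ℓ : V →ₗ[K] K} (hℓ : ℓ ≠ 0) (a : K) :
    Fintype.card K * #{x | ℓ x = a} = Fintype.card V :=
  card_mul_card_addFiber_of_surjective (φ := ℓ.toAddMonoidHom) (LinearMap.surjective hℓ) a

variable {K L : Type*} [Field K] [Field L] [Fintype K] [Fintype L] [Algebra K L]

lemma card_units_mul_card_norm_eq {y : K} (hy : y ≠ 0) :
    Fintype.card Kˣ * #{x : L | Algebra.norm K x = y} = Fintype.card Lˣ := by
  rw [← card_mul_card_fiber_of_surjective (FiniteField.unitsMap_norm_surjective K L)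
    (Units.mk0 y hy)]
  congr 1
  symm
  refine card_bij (fun x _ ↦ (x : L)) (fun x hx ↦ ?_) (fun _ _ _ _ ↦ Units.ext) fun x hx ↦ ?_
  · simpa [Units.ext_iff] using hx
  · have hx : Algebra.norm K x = y := by simpa using hx
    have hx0 : x ≠ 0 := fun h ↦ hy (by rw [← hx, h, Algebra.norm_zero])
    exact ⟨Units.mk0 x hx0, by simpa [Units.ext_iff] using hx, rfl⟩

lemma card_norm_eq_of_finrank_eq_two (h : Module.finrank K L = 2) {y : K} (hy : y ≠ 0) :
    #{x : L | Algebra.norm K x = y} = Fintype.card K + 1 := by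
  have hfiber := card_units_mul_card_norm_eq (L := L) hy
  have hpos : 0 < Fintype.card Kˣ := Fintype.card_pos
  rw [Fintype.card_units L, Module.card_eq_pow_finrank (K := K) (V := L), h] at hfiber
  refine Nat.eq_of_mul_eq_mul_left hpos (hfiber.trans ?_)
  rw [Fintype.card_units, mul_comm, ← Nat.sq_sub_sq, one_pow]

lemma card_filter_norm_of_finrank_eq_two (h : Module.finrank K L = 2) (p : K → Prop) :
    #{x : L | p (Algebra.norm K x)} + (if p 0 then Fintype.card K else 0) =
      (Fintype.card K + 1) * #{y | p y} := by
  have hzero : #{x : L | Algebra.norm K x = 0} = 1 := by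
    rw [card_eq_one]
    exact ⟨0, by ext; simp⟩
  have hfiber (y : K) : #{x : L | Algebra.norm K x = y} + (if y = 0 then Fintype.card K else 0) =
      Fintype.card K + 1 := by
    by_cases hy : y = 0
    · rw [hy, hzero, if_pos rfl, add_comm]
    · simp [hy, card_norm_eq_of_finrank_eq_two h hy]
  have hpart : #{x : L | p (Algebra.norm K x)} =
      ∑ y with p y, #{x : L | Algebra.norm K x = y} := by
    simpa using (sum_card_fiberwise_eq_card_filter univ {y | p y} (Algebra.norm K (S := L))).symm
  have hcorr : (if p 0 then Fintype.card K else 0) =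
      ∑ y with p y, if y = 0 then Fintype.card K else 0 := by
    simp
  rw [hpart, hcorr, ← sum_add_distrib, sum_congr rfl fun y _ ↦ hfiber y, sum_const, smul_eq_mul,
    mul_comm]

end Fibers

section NormForm

open QuadraticMap

variable {R S : Type*} [CommRing R] [Nontrivial R] [CommRing S] [Algebra R S] [Module.Free R S]

lemma norm_add_of_finrank_eq_two (h : Module.finrank R S = 2) (x y : S) :
    Algebra.norm R (x + y) = Algebra.norm R x + Algebra.norm R y +
      (Algebra.trace R S x * Algebra.trace R S y - Algebra.trace R S (x * y)) := by
  have : Module.Finite R S := Module.finite_of_finrank_pos (by omega)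
  let B := Module.finBasisOfFinrankEq R S h
  simp only [Algebra.norm_eq_matrix_det B, Algebra.trace_eq_matrix_trace B, map_add, map_mul,
    Matrix.det_fin_two, Matrix.trace_fin_two, Matrix.add_apply, Matrix.mul_apply, Fin.sum_univ_two]
  ring

lemma norm_smul_of_finrank_eq_two (h : Module.finrank R S = 2) (a : R) (x : S) :
    Algebra.norm R (a • x) = a * a * Algebra.norm R x := by
  have : Module.Finite R S := Module.finite_of_finrank_pos (by omega)
  have hnorm := Algebra.norm_algebraMap_of_basis (Module.finBasisOfFinrankEq R S h) a
  rw [Algebra.smul_def, map_mul, hnorm, Fintype.card_fin, pow_two]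

/-- The norm of a free algebra of rank two, as a quadratic form. -/
def normForm (h : Module.finrank R S = 2) : QuadraticForm R S where
  toFun := Algebra.norm R
  toFun_smul := norm_smul_of_finrank_eq_two h
  exists_companion' :=
    ⟨LinearMap.BilinForm.linMulLin (Algebra.trace R S) (Algebra.trace R S) - Algebra.traceForm R S,
      norm_add_of_finrank_eq_two h⟩

lemma normForm_apply (h : Module.finrank R S = 2) (x : S) : normForm h x = Algebra.norm R x :=
  rfl

variable (R) in
/-- The conjugate of an element of a free algebra of rank two. Over finite fields with `q ^ r` and
`q ^ (2 * r)` elements this is `x ↦ x ^ (q ^ r)`. -/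
def quadraticConj (x : S) : S := algebraMap R S (Algebra.trace R S x) - x

lemma polar_normForm_quadraticConj (h : Module.finrank R S = 2) (x b : S) :
    polar (normForm h) x (quadraticConj R b) = Algebra.trace R S (b * x) := by
  have htrace : Algebra.trace R S (quadraticConj R b) = Algebra.trace R S b := by
    rw [quadraticConj, map_sub, Algebra.trace_algebraMap, h, two_nsmul, add_sub_cancel_right]
  have hmul : x * quadraticConj R b = Algebra.trace R S b • x - b * x := by
    rw [quadraticConj, Algebra.smul_def]
    ring
  simp only [polar, normForm_apply, norm_add_of_finrank_eq_two h, htrace, hmul, map_sub, map_smul,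
    smul_eq_mul]
  ring

lemma norm_quadraticConj (h : Module.finrank R S = 2) (b : S) :
    Algebra.norm R (quadraticConj R b) = Algebra.norm R b := by
  have hadd : b + quadraticConj R b = Algebra.trace R S b • (1 : S) := by
    rw [quadraticConj, add_sub_cancel, Algebra.algebraMap_eq_smul_one]
  have hconj := polar_normForm_quadraticConj h b b
  simp only [polar, normForm_apply, hadd, norm_smul_of_finrank_eq_two h, map_one] at hconj
  have hdouble := norm_add_of_finrank_eq_two h b b
  rw [← two_smul R b, norm_smul_of_finrank_eq_two h] at hdouble
  linear_combination -hconj - hdouble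

end NormForm

section FiniteFields

variable {K : Type*} [Field K] [Fintype K]

lemma finrank_eq_of_card_eq_pow {V : Type*} [AddCommGroup V] [Module K V] [Fintype V] {n : ℕ}
    (h : Fintype.card V = Fintype.card K ^ n) : Module.finrank K V = n :=
  Nat.pow_right_injective Fintype.one_lt_card (Module.card_eq_pow_finrank.symm.trans h)

lemma algebraMap_norm_of_finrank_eq_two {L : Type*} [Field L] [Algebra K L]
    (h : Module.finrank K L = 2) (x : L) :
    algebraMap K L (Algebra.norm K x) = x ^ (Fintype.card K + 1) := by
  have : Module.Finite K L := Module.finite_of_finrank_pos (by omega)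
  have : Finite L := Module.finite_of_finite K
  rw [FiniteField.algebraMap_norm_eq_pow_sum, h, Fintype.card_eq_nat_card, Finset.sum_range_succ,
    Finset.sum_range_one, pow_zero, pow_one, add_comm]

end FiniteFields

section TraceNorm

open Finset QuadraticMap

variable {K L M : Type*} [Field K] [Field L] [Field M] [Fintype K] [Fintype L] [Fintype M]
  [Algebra K L] [Algebra L M]

lemma card_mul_card_trace_norm_eq (h : Module.finrank L M = 2) (a : K) :
    Fintype.card K * (#{x : M | Algebra.trace K L (Algebra.norm L x) = a} +
      if a = 0 then Fintype.card L else 0) = (Fintype.card L + 1) * Fintype.card L := by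
  have hnorm := card_filter_norm_of_finrank_eq_two h fun y ↦ Algebra.trace K L y = a
  simp only [map_zero] at hnorm
  simp only [eq_comm (a := a) (b := 0), hnorm]
  rw [mul_left_comm, card_mul_card_linearMap_eq (Algebra.trace_ne_zero K L)]

variable [Algebra K M] [IsScalarTower K L M]

lemma card_mul_card_trace_mul_eq {b : M} (hb : b ≠ 0) (s : K) :
    Fintype.card K * #{x : M | Algebra.trace K M (b * x) = s} = Fintype.card M := by
  have hℓ : Algebra.traceForm K M b ≠ 0 := fun h ↦
    hb ((traceForm_nondegenerate K M).1 b fun x ↦ LinearMap.congr_fun h x)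
  exact card_mul_card_linearMap_eq hℓ s

theorem card_trace_mul_eq_and_trace_norm_eq_zero (h : Module.finrank L M = 2) {b : M} (hb : b ≠ 0)
    {s : K} (hs : s ≠ 0) :
    Fintype.card K ^ 2 * #{x : M | Algebra.trace K M (b * x) = s ∧
        Algebra.trace K L (Algebra.norm L x) = 0} +
      (if Algebra.trace K L (Algebra.norm L b) = 0 then 0 else Fintype.card K * Fintype.card L) =
    Fintype.card M := by
  let Q : QuadraticForm K M := (Algebra.trace K L).compQuadraticMap' (normForm h)
  have hpolar (x : M) : polar Q x (quadraticConj L b) = Algebra.trace K M (b * x) := by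
    rw [LinearMap.compQuadraticMap_polar, polar_normForm_quadraticConj, Algebra.trace_trace]
  have hQ (x : M) : Q x = Algebra.trace K L (Algebra.norm L x) := rfl
  have hQb : Q (quadraticConj L b) = Algebra.trace K L (Algebra.norm L b) := by
    rw [hQ, norm_quadraticConj h]
  have hvalue (a : K) (ha : a ≠ 0) :
      (#{x | Q x = a} : ℤ) = #{x | Q x = 0} + Fintype.card L := by
    have hcard := (card_mul_card_trace_norm_eq h a).trans
      (card_mul_card_trace_norm_eq h (0 : K)).symm
    rw [if_neg ha, add_zero, if_pos rfl] at hcard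
    exact mod_cast Nat.eq_of_mul_eq_mul_left Fintype.card_pos hcard
  have hcount := card_mul_card_polar_eq_and_eq_zero Q (quadraticConj L b) hvalue hs
  simp only [hpolar, hQb, hQ] at hcount
  have htrace := card_mul_card_trace_mul_eq hb s
  zify at htrace ⊢
  rw [← htrace, pow_two, mul_assoc, hcount]
  split_ifs <;> ring

end TraceNorm

theorem stmt2 (p a q r m : ℕ) (hp : p.Prime) (ha : 0 < a) (hqpa : q = p ^ a)
    (hr : 0 < r) (hm : m = 2 * r)
    (Fq Fr Fm : Type) [Field Fq] [Field Fr] [Field Fm]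
    [Fintype Fq] [Fintype Fr] [Fintype Fm]
    [Algebra Fq Fr] [Algebra Fr Fm] [Algebra Fq Fm] [IsScalarTower Fq Fr Fm]
    (hcq : Fintype.card Fq = q) (hcr : Fintype.card Fr = q ^ r)
    (hcm : Fintype.card Fm = q ^ m)
    (g : Fm → Fr) (hg : ∀ x : Fm, algebraMap Fr Fm (g x) = x ^ (q ^ r + 1))
    (s : Fq) (hs : s ≠ 0) (b : Fm) (hb : b ≠ 0)
    (Ns : ℕ)
    (hNs : Ns = Nat.card {x : Fm //
      Algebra.trace Fq Fm (b * x) = s ∧ Algebra.trace Fq Fr (g x) = 0}) :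
    (Algebra.trace Fq Fr (g b) = 0 → Ns = q ^ (m - 2)) ∧
    (Algebra.trace Fq Fr (g b) ≠ 0 → Ns = q ^ (m - 2) - q ^ (r - 1)) := by
  have hcard : Fintype.card Fm = Fintype.card Fr ^ 2 := by rw [hcm, hcr, hm, ← pow_mul, mul_comm]
  have hrank : Module.finrank Fr Fm = 2 := finrank_eq_of_card_eq_pow hcard
  have hnorm (x : Fm) : Algebra.norm Fr x = g x :=
    (algebraMap Fr Fm).injective (by rw [hg, algebraMap_norm_of_finrank_eq_two hrank, hcr])
  have hcount := card_trace_mul_eq_and_trace_norm_eq_zero hrank hb hs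
  rw [Nat.card_eq_fintype_card, Fintype.card_subtype] at hNs
  have hm2 : q ^ m = q ^ 2 * q ^ (m - 2) := by rw [← pow_add]; congr; omega
  have hr1 : q * q ^ r = q ^ 2 * q ^ (r - 1) := by rw [← pow_add, ← pow_succ']; congr 1; omega
  have hq2 : 0 < q ^ 2 := pow_pos (hcq ▸ Fintype.card_pos) 2
  simp only [hnorm, ← hNs, hcq, hcr, hcm, hm2, hr1] at hcount
  refine ⟨fun hgb ↦ ?_, fun hgb ↦ ?_⟩
  · rw [if_pos hgb, add_zero] at hcount
    exact Nat.eq_of_mul_eq_mul_left hq2 hcount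
  · rw [if_neg hgb, ← mul_add] at hcount
    exact Nat.eq_sub_of_add_eq (Nat.eq_of_mul_eq_mul_left hq2 hcount)
end
end

section
/- Let q be a prime power and m = 2r with r ≥ 2, and set n = q^{r−1}(q^r − q + 1). If q > 2, then the dual code \overline{C_D}^⊥ has length n, dimension n − m − 1, and minimum distance 3. If q = 2 and r > 2, then \overline{C_D}^⊥ has length n, dimension n − m − 1, and minimum distance 4. -/
open scoped Classical

noncomputable section

/-!
The dual of the augmented code is the kernel of the parity check whose column at `d ∈ D` is
`(d, 1)`; once `0 ∈ D` and `D` spans `K`, this map is onto `K × F`, which gives the dimension.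
Distinct columns are linearly independent, so nonzero words have weight at least `3`, and over the
field with two elements the last row makes every weight even. Conversely, three points `0`, `x`,
`c • x` of `D` carry a word of weight `3` when `c ≠ 0, 1`, and if `D` has more pairs than `K` has
elements, two pairs with the same sum carry a word of weight at most `4`.

Here `D` is the zero set of `Tr ∘ N` for a tower of finite fields `F ⊆ A ⊆ B`. All fibres of the
norm `N : B → A` away from `0` have the size of the group of elements of norm `1`, which counts `D`.
If `[B : A] ≥ 2`, that group has more than `√|B|` elements, so it generates `B`; since it acts on
`D ≠ {0}` by multiplication, `D` spans `B`.
-/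

section LinearCode

variable {F V ι : Type*} [Field F] [AddCommGroup V] [Module F V] [Fintype ι]

theorem IsMinDist.of_hammingNorm_le {C : Set (ι → F)} {k : ℕ}
    (hC : ∀ c ∈ C, c ≠ 0 → k ≤ hammingNorm c) {c : ι → F} (hc : c ∈ C) (hc0 : c ≠ 0)
    (hck : hammingNorm c ≤ k) : IsMinDist C k :=
  ⟨⟨c, hc, hc0, hck.antisymm (hC c hc hc0)⟩, hC⟩

theorem hammingNorm_le_card_of_forall_notMem {u : ι → F} {s : Finset ι}
    (h : ∀ i ∉ s, u i = 0) : hammingNorm u ≤ s.card :=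
  Finset.card_le_card fun i hi => by_contra fun his => (Finset.mem_filter.1 hi).2 (h i his)

theorem three_le_hammingNorm {v : ι → V} (hv : Function.Injective v) {u : ι → F} (hu : u ≠ 0)
    (hsmul : ∑ i, u i • v i = 0) (hsum : ∑ i, u i = 0) : 3 ≤ hammingNorm u := by
  set s : Finset ι := {i | u i ≠ 0} with hs
  have hmem {i : ι} (hi : i ∈ s) : u i ≠ 0 := (Finset.mem_filter.1 hi).2
  rw [← Finset.sum_filter_of_ne (p := fun i => u i ≠ 0) fun i _ => left_ne_zero_of_smul,
    ← hs] at hsmul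
  rw [← Finset.sum_filter_ne_zero, ← hs] at hsum
  have hpos : 0 < s.card := hammingNorm_pos_iff.2 hu
  have h1 : s.card ≠ 1 := by
    intro h
    obtain ⟨i, hi⟩ := Finset.card_eq_one.1 h
    rw [hi, Finset.sum_singleton] at hsum
    exact hmem (by simp [hi]) hsum
  have h2 : s.card ≠ 2 := by
    intro h
    obtain ⟨i, j, hij, hsij⟩ := Finset.card_eq_two.1 h
    rw [hsij, Finset.sum_pair hij] at hsmul hsum
    rw [eq_neg_of_add_eq_zero_right hsum, neg_smul, ← sub_eq_add_neg, ← smul_sub] at hsmul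
    exact smul_ne_zero (hmem (by simp [hsij])) (sub_ne_zero.2 (hv.ne hij)) hsmul
  change 3 ≤ s.card
  omega

theorem even_hammingNorm_of_card_eq_two (hF : Nat.card F = 2) {u : ι → F}
    (hsum : ∑ i, u i = 0) : Even (hammingNorm u) := by
  have : Finite F := Nat.finite_of_card_ne_zero (by omega)
  have : Fintype F := Fintype.ofFinite F
  rw [Nat.card_eq_fintype_card] at hF
  have : CharP F 2 := charP_of_card_eq_prime hF
  have hone {x : F} (hx : x ≠ 0) : x = 1 := by
    simpa [hF] using FiniteField.pow_card_sub_one_eq_one x hx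
  rw [even_iff_two_dvd, ← CharP.cast_eq_zero_iff F, ← hsum, ← Finset.sum_filter_ne_zero,
    Finset.sum_congr rfl fun i hi => hone (Finset.mem_filter.1 hi).2]
  simp [hammingNorm]

theorem exists_linearCombination_eq_zero_of_sum_eq (v : ι → V) {s t : Finset ι} (hst : s ≠ t)
    (h : ∑ i ∈ s, v i = ∑ i ∈ t, v i) :
    ∃ u : ι → F, Fintype.linearCombination F v u = 0 ∧ u ≠ 0 ∧
      hammingNorm u ≤ s.card + t.card := by
  refine ⟨fun i => (if i ∈ s then 1 else 0) - (if i ∈ t then 1 else 0), ?_, ?_, ?_⟩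
  · simp [Fintype.linearCombination_apply, sub_smul, h]
  · intro hu
    refine hst (Finset.ext fun i => ?_)
    have := congrFun hu i
    by_cases his : i ∈ s <;> by_cases hit : i ∈ t <;> simp_all
  · refine (hammingNorm_le_card_of_forall_notMem (s := s ∪ t) fun i hi => ?_).trans
      (Finset.card_union_le s t)
    simp_all

theorem exists_ne_sum_eq_of_card_lt_choose [Finite V] (v : ι → V) {k : ℕ}
    (h : Nat.card V < (Fintype.card ι).choose k) :
    ∃ s t : Finset ι, s.card = k ∧ t.card = k ∧ s ≠ t ∧ ∑ i ∈ s, v i = ∑ i ∈ t, v i := by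
  have : Fintype V := Fintype.ofFinite V
  rw [Nat.card_eq_fintype_card, ← Finset.card_univ, ← Finset.card_univ,
    ← Finset.card_powersetCard] at h
  obtain ⟨s, hs, t, ht, hst, hsum⟩ := Finset.exists_ne_map_eq_of_card_lt_of_maps_to h
    (f := fun s => ∑ i ∈ s, v i) fun s _ => Finset.mem_coe.2 (Finset.mem_univ _)
  exact ⟨s, t, (Finset.mem_powersetCard.1 hs).2, (Finset.mem_powersetCard.1 ht).2, hst, hsum⟩

theorem finrank_eq_of_natCard_eq_pow_s4 [Finite F] [FiniteDimensional F V] {k : ℕ}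
    (h : Nat.card V = Nat.card F ^ k) : Module.finrank F V = k :=
  Nat.pow_right_injective Finite.one_lt_card ((Module.natCard_eq_pow_finrank (K := F)).symm.trans h)

theorem natCard_ker_of_surjective {W : Type*} [AddCommGroup W] [Module F W]
    [FiniteDimensional F V] {f : V →ₗ[F] W} (hf : Function.Surjective f) :
    Nat.card (LinearMap.ker f) = Nat.card F ^ (Module.finrank F V - Module.finrank F W) := by
  have hrank := f.finrank_range_add_finrank_ker
  rw [LinearMap.range_eq_top.2 hf, finrank_top] at hrank
  rw [Module.natCard_eq_pow_finrank (K := F), ← hrank, Nat.add_sub_cancel_left]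

end LinearCode

section AugmentedCode

variable {F K : Type*} [Field F] [Field K] [Algebra F K] {P : K → Prop} [Fintype {x : K // P x}]

/-- The parity check of the dual of the augmented code with defining set `{x : K // P x}`: its
column at `d` is `(d, 1)`, so that the dual code is its kernel. -/
def augParityCheck (F : Type*) {K : Type*} [Field F] [Field K] [Algebra F K] (P : K → Prop)
    [Fintype {x : K // P x}] : ({x : K // P x} → F) →ₗ[F] K × F :=
  Fintype.linearCombination F fun d => (d.1, 1)

theorem augParityCheck_apply (u : {x : K // P x} → F) :
    augParityCheck F P u = (∑ d, u d • d.1, ∑ d, u d) := by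
  simp [augParityCheck, Fintype.linearCombination_apply, Prod.ext_iff, Prod.fst_sum, Prod.snd_sum]

theorem augParityCheck_eq_zero {u : {x : K // P x} → F} :
    augParityCheck F P u = 0 ↔ ∑ d, u d • d.1 = 0 ∧ ∑ d, u d = 0 := by
  rw [augParityCheck_apply, Prod.mk_eq_zero]

theorem sum_mul_trace_add (u : {x : K // P x} → F) (b : K) (c : F) :
    ∑ d, u d * (Algebra.trace F K (b * d.1) + c) =
      Algebra.trace F K (b * ∑ d, u d • d.1) + (∑ d, u d) * c := by
  simp only [mul_add, Finset.sum_add_distrib, Finset.mul_sum, Finset.sum_mul, map_sum,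
    mul_smul_comm, map_smul, smul_eq_mul]

theorem dualCode_augCode [FiniteDimensional F K] [Algebra.IsSeparable F K] :
    dualCode (augCode F K P) = LinearMap.ker (augParityCheck F P) := by
  ext u
  rw [SetLike.mem_coe, LinearMap.mem_ker, augParityCheck_eq_zero]
  constructor
  · intro hu
    have horth (b : K) (c : F) :
        Algebra.trace F K (b * ∑ d, u d • d.1) + (∑ d, u d) * c = 0 := by
      rw [← sum_mul_trace_add]
      exact hu (fun d => Algebra.trace F K (b * d.1) + c) ⟨b, c, fun _ => rfl⟩
    refine ⟨(traceForm_nondegenerate F K).1 _ fun b => ?_, by simpa using horth 0 1⟩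
    rw [Algebra.traceForm_apply, mul_comm]
    simpa only [mul_zero, add_zero] using horth b 0
  · rintro ⟨hsmul, hsum⟩ v ⟨b, c, hv⟩
    simp only [hv, sum_mul_trace_add, hsmul, hsum, mul_zero, map_zero, zero_mul, add_zero]

theorem augParityCheck_surjective (hP0 : P 0) (hspan : Submodule.span F {x | P x} = ⊤) :
    Function.Surjective (augParityCheck F P) := by
  rw [augParityCheck, ← span_range_eq_top_iff_surjective_fintypeLinearCombination, eq_top_iff]
  set S := Submodule.span F (Set.range fun d : {x : K // P x} => (d.1, (1 : F)))
  have hcol {x : K} (hx : P x) : (x, (1 : F)) ∈ S := Submodule.subset_span ⟨⟨x, hx⟩, rfl⟩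
  have hfst (x : K) : (x, (0 : F)) ∈ S := by
    have hle : Submodule.span F {x | P x} ≤ S.comap (LinearMap.inl F K F) :=
      Submodule.span_le.2 fun x hx => by simpa using S.sub_mem (hcol hx) (hcol hP0)
    exact hle (hspan ▸ Submodule.mem_top)
  rintro ⟨x, c⟩ -
  simpa using S.add_mem (hfst x) (S.smul_mem c (hcol hP0))

theorem natCard_dualCode_augCode [FiniteDimensional F K] [Algebra.IsSeparable F K]
    (hP0 : P 0) (hspan : Submodule.span F {x | P x} = ⊤) :
    Nat.card (dualCode (augCode F K P)) =
      Nat.card F ^ (Fintype.card {x : K // P x} - Module.finrank F K - 1) := by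
  rw [dualCode_augCode, SetLike.coe_sort_coe,
    natCard_ker_of_surjective (augParityCheck_surjective hP0 hspan), Module.finrank_prod,
    Module.finrank_self, Module.finrank_fintype_fun_eq_card, Nat.sub_sub]

theorem three_le_hammingNorm_of_augParityCheck_eq_zero {u : {x : K // P x} → F}
    (hu : augParityCheck F P u = 0) (hu0 : u ≠ 0) : 3 ≤ hammingNorm u :=
  have ⟨hsmul, hsum⟩ := augParityCheck_eq_zero.1 hu
  three_le_hammingNorm Subtype.val_injective hu0 hsmul hsum

theorem four_le_hammingNorm_of_augParityCheck_eq_zero (hF : Nat.card F = 2)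
    {u : {x : K // P x} → F} (hu : augParityCheck F P u = 0) (hu0 : u ≠ 0) :
    4 ≤ hammingNorm u := by
  have hthree := three_le_hammingNorm_of_augParityCheck_eq_zero hu hu0
  have heven := even_hammingNorm_of_card_eq_two hF (augParityCheck_eq_zero.1 hu).2
  grind

-- The three points `0`, `x` and `c • x` of a line satisfy `(c - 1) • 0 - c • x + c • x = 0`.
theorem exists_augParityCheck_eq_zero_hammingNorm_le_three (hP0 : P 0)
    (hsmul : ∀ (c : F) x, P x → P (c • x)) {x : K} (hx : P x) (hx0 : x ≠ 0)
    (hF : 2 < Nat.card F) :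
    ∃ u, augParityCheck F P u = 0 ∧ u ≠ 0 ∧ hammingNorm u ≤ 3 := by
  obtain ⟨c, hc⟩ : ∃ c : F, c ∉ ({0, 1} : Finset F) := by
    by_contra! hall
    have : Finite F := Nat.finite_of_card_ne_zero (by omega)
    have : Fintype F := Fintype.ofFinite F
    rw [Nat.card_eq_fintype_card, ← Finset.card_univ, ← Finset.eq_univ_of_forall hall] at hF
    exact hF.not_ge Finset.card_le_two
  simp only [Finset.mem_insert, Finset.mem_singleton, not_or] at hc
  obtain ⟨hc0, hc1⟩ := hc
  let d₀ : {x // P x} := ⟨0, hP0⟩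
  let d₁ : {x // P x} := ⟨x, hx⟩
  let d₂ : {x // P x} := ⟨c • x, hsmul c x hx⟩
  have h20 : d₂ ≠ d₀ := fun h => smul_ne_zero hc0 hx0 (Subtype.ext_iff.1 h)
  have h21 : d₂ ≠ d₁ := fun h =>
    hc1 (smul_left_injective F hx0 (by simpa using Subtype.ext_iff.1 h))
  refine ⟨Pi.single d₀ (c - 1) - Pi.single d₁ c + Pi.single d₂ 1, ?_, ?_, ?_⟩
  · simp [augParityCheck, d₀, d₁, d₂]
  · exact fun h => one_ne_zero (α := F) (by simpa [h20, h21] using congrFun h d₂)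
  · refine (hammingNorm_le_card_of_forall_notMem (s := {d₀, d₁, d₂}) fun d hd => ?_).trans
      Finset.card_le_three
    simp_all

theorem exists_augParityCheck_eq_zero_hammingNorm_le_four [Finite K]
    (hcard : Nat.card K < (Fintype.card {x : K // P x}).choose 2) :
    ∃ u, augParityCheck F P u = 0 ∧ u ≠ 0 ∧ hammingNorm u ≤ 4 := by
  obtain ⟨s, t, hs, ht, hst, hsum⟩ :=
    exists_ne_sum_eq_of_card_lt_choose (fun d : {x : K // P x} => d.1) hcard
  have := exists_linearCombination_eq_zero_of_sum_eq (F := F)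
    (fun d : {x : K // P x} => (d.1, (1 : F))) hst
    (by simp [Prod.ext_iff, Prod.fst_sum, Prod.snd_sum, hsum, hs, ht])
  rwa [hs, ht] at this

theorem isMinDist_dualCode_augCode_three [FiniteDimensional F K] [Algebra.IsSeparable F K]
    (hP0 : P 0) (hsmul : ∀ (c : F) x, P x → P (c • x)) {x : K} (hx : P x) (hx0 : x ≠ 0)
    (hF : 2 < Nat.card F) : IsMinDist (dualCode (augCode F K P)) 3 := by
  rw [dualCode_augCode]
  obtain ⟨u, hu, hu0, hle⟩ :=
    exists_augParityCheck_eq_zero_hammingNorm_le_three hP0 hsmul hx hx0 hF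
  exact .of_hammingNorm_le (fun c => three_le_hammingNorm_of_augParityCheck_eq_zero) hu hu0 hle

theorem isMinDist_dualCode_augCode_four [FiniteDimensional F K] (hF : Nat.card F = 2)
    (hcard : Nat.card K < (Fintype.card {x : K // P x}).choose 2) :
    IsMinDist (dualCode (augCode F K P)) 4 := by
  have : Finite F := Nat.finite_of_card_ne_zero (by omega)
  have : Finite K := Module.finite_of_finite F
  rw [dualCode_augCode]
  obtain ⟨u, hu, hu0, hle⟩ := exists_augParityCheck_eq_zero_hammingNorm_le_four (F := F) hcard
  exact .of_hammingNorm_le (fun c => four_le_hammingNorm_of_augParityCheck_eq_zero hF) hu hu0 hle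

end AugmentedCode

theorem mul_sub_add_one_eq {q r : ℕ} (hq : 0 < q) (hr : 0 < r) :
    q ^ (r - 1) * (q ^ r - q + 1) = (q ^ (r - 1) - 1) * (q ^ r + 1) + 1 := by
  obtain ⟨s, rfl⟩ := Nat.exists_eq_add_one.2 hr
  rw [Nat.add_sub_cancel]
  have hle : q ≤ q ^ (s + 1) := Nat.le_self_pow s.succ_ne_zero q
  have hpos : 1 ≤ q ^ s := Nat.one_le_pow _ _ hq
  zify [hle, hpos]
  ring

theorem lt_choose_two_of_nine_le {a N : ℕ} (ha : 0 < a) (hN : 9 ≤ N) :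
    (2 * a + 1) * N + 1 < (a * N + 1).choose 2 := by
  have hle : N ≤ a * N := Nat.le_mul_of_pos_left N ha
  rw [Nat.choose_two_right, Nat.add_sub_cancel, Nat.lt_iff_add_one_le,
    Nat.le_div_iff_mul_le two_pos]
  nlinarith

theorem nine_le_sum_two_pow {r d : ℕ} (hr : 2 ≤ r) (hd : 2 ≤ d) (h : 2 < r ∨ 2 < d) :
    9 ≤ ∑ i ∈ Finset.range d, (2 ^ r) ^ i := by
  obtain h | h := h
  · calc 9 = ∑ i ∈ Finset.range 2, (2 ^ 3) ^ i := by decide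
      _ ≤ ∑ i ∈ Finset.range 2, (2 ^ r) ^ i := by gcongr; exacts [one_le_two, h]
      _ ≤ _ := Finset.sum_le_sum_of_subset (Finset.range_subset_range.2 hd)
  · calc 9 ≤ ∑ i ∈ Finset.range 3, (2 ^ 2) ^ i := by decide
      _ ≤ ∑ i ∈ Finset.range 3, (2 ^ r) ^ i := by gcongr; exact one_le_two
      _ ≤ _ := Finset.sum_le_sum_of_subset (Finset.range_subset_range.2 h)

theorem subalgebra_eq_top_of_natCard_lt_sq {F B : Type*} [Field F] [Field B] [Finite B]
    [Algebra F B] (S : Subalgebra F B)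
    (h : Nat.card B < Nat.card S ^ 2) : S = ⊤ := by
  let _ : Field S := (Finite.isField_of_domain S).toField
  have hcard : Nat.card B = Nat.card S ^ Module.finrank S B := Module.natCard_eq_pow_finrank
  have hlt : Module.finrank S B < 2 := by
    rw [hcard] at h
    exact (Nat.pow_lt_pow_iff_right Finite.one_lt_card).1 h
  have hone : Module.finrank S B = 1 := by
    have : 0 < Module.finrank S B := Module.finrank_pos
    omega
  rw [hone, pow_one] at hcard
  exact SetLike.coe_injective (Set.eq_top_of_card_le_of_finite hcard.le)

section TraceNorm

variable {F A B : Type*} [Field F] [Field A] [Field B] [Finite B] [Algebra A B]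

theorem ncard_norm_eq {t : A} (ht : t ≠ 0) :
    {x : B | Algebra.norm A x = t}.ncard = {x : B | Algebra.norm A x = 1}.ncard := by
  have : Finite A := .of_injective _ (algebraMap A B).injective
  obtain ⟨z, rfl⟩ := FiniteField.norm_surjective A B t
  have hz : z ≠ 0 := by
    rintro rfl
    exact ht Algebra.norm_zero
  exact (Nat.card_congr ((Equiv.mulLeft₀ z hz).subtypeEquiv fun x => by simp [ht])).symm

theorem ncard_norm_preimage_of_zero_notMem {S : Set A} (hS : 0 ∉ S) :
    (Algebra.norm A (S := B) ⁻¹' S).ncard =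
      S.ncard * {x : B | Algebra.norm A x = 1}.ncard := by
  have : Finite A := .of_injective _ (algebraMap A B).injective
  have : Fintype S := Fintype.ofFinite S
  have hfiber (t : S) :
      Nat.card {x : B // Algebra.norm A x = t} = {x : B | Algebra.norm A x = 1}.ncard :=
    ncard_norm_eq fun h => hS (h ▸ t.2)
  calc (Algebra.norm A (S := B) ⁻¹' S).ncard
      = Nat.card (Σ t : S, {x : B // Algebra.norm A x = t}) := (Nat.card_congr
          (Equiv.sigmaSubtypeFiberEquivSubtype (Algebra.norm A) (q := (· ∈ S))
            fun _ => Iff.rfl)).symm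
    _ = ∑ _t : S, {x : B | Algebra.norm A x = 1}.ncard :=
        Nat.card_sigma.trans (Finset.sum_congr rfl fun t _ => hfiber t)
    _ = S.ncard * {x : B | Algebra.norm A x = 1}.ncard := by
        rw [Finset.sum_const, smul_eq_mul, Finset.card_univ, ← Nat.card_eq_fintype_card,
          Nat.card_coe_set_eq]

theorem ncard_norm_preimage_of_zero_mem {S : Set A} (hS : 0 ∈ S) :
    (Algebra.norm A (S := B) ⁻¹' S).ncard =
      (S.ncard - 1) * {x : B | Algebra.norm A x = 1}.ncard + 1 := by
  have hinsert : Algebra.norm A (S := B) ⁻¹' S =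
      insert 0 (Algebra.norm A (S := B) ⁻¹' (S \ {0})) := by
    ext x
    by_cases hx : x = 0 <;> simp [hx, hS]
  rw [hinsert, Set.ncard_insert_of_notMem (by simp) (Set.toFinite _),
    ncard_norm_preimage_of_zero_notMem (by simp), Set.ncard_sdiff_singleton_of_mem hS]

variable (A B) in
theorem natCard_eq_mul_ncard_norm_eq_one_add_one :
    Nat.card B = (Nat.card A - 1) * {x : B | Algebra.norm A x = 1}.ncard + 1 := by
  simpa [Set.ncard_univ] using ncard_norm_preimage_of_zero_mem (B := B) (Set.mem_univ (0 : A))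

variable (A B) in
theorem ncard_norm_eq_one :
    {x : B | Algebra.norm A x = 1}.ncard =
      ∑ i ∈ Finset.range (Module.finrank A B), Nat.card A ^ i := by
  have : Finite A := .of_injective _ (algebraMap A B).injective
  have hA : 1 < Nat.card A := Finite.one_lt_card
  have hcard := natCard_eq_mul_ncard_norm_eq_one_add_one A B
  have hgeom := geom_sum_mul_add (Nat.card A - 1) (Module.finrank A B)
  rw [Nat.sub_add_cancel hA.le, ← Module.natCard_eq_pow_finrank, hcard, Nat.add_right_cancel_iff,
    mul_comm] at hgeom
  exact (Nat.eq_of_mul_eq_mul_left (Nat.sub_pos_of_lt hA) hgeom).symm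

variable (F A B) in
theorem adjoin_norm_eq_one [Algebra F B] (hAB : 2 ≤ Module.finrank A B) :
    Algebra.adjoin F {x : B | Algebra.norm A x = 1} = ⊤ := by
  have : Finite A := .of_injective _ (algebraMap A B).injective
  apply subalgebra_eq_top_of_natCard_lt_sq
  set N := {x : B | Algebra.norm A x = 1}.ncard with hN
  have hle : N ≤ Nat.card (Algebra.adjoin F {x : B | Algebra.norm A x = 1}) :=
    Set.ncard_le_ncard Algebra.subset_adjoin (Set.toFinite _)
  have hlt : Nat.card A + 1 ≤ N := by
    rw [hN, ncard_norm_eq_one]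
    calc Nat.card A + 1 = ∑ i ∈ Finset.range 2, Nat.card A ^ i := by
          simp [Finset.sum_range_succ, add_comm]
      _ ≤ _ := Finset.sum_le_sum_of_subset (Finset.range_subset_range.2 hAB)
  calc Nat.card B = (Nat.card A - 1) * N + 1 := natCard_eq_mul_ncard_norm_eq_one_add_one A B
    _ ≤ Nat.card A * N + 1 := by gcongr; omega
    _ < (Nat.card A + 1) * N := by
      have : 0 < Nat.card A := Nat.card_pos
      rw [add_mul]
      omega
    _ ≤ N ^ 2 := by rw [sq]; gcongr
    _ ≤ _ := by gcongr

variable [Algebra F A]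

variable (F A B) in
theorem ncard_trace_norm_eq_zero :
    {x : B | Algebra.trace F A (Algebra.norm A x) = 0}.ncard =
      (Nat.card F ^ (Module.finrank F A - 1) - 1) * {x : B | Algebra.norm A x = 1}.ncard + 1 := by
  have : Finite A := .of_injective _ (algebraMap A B).injective
  have hker : (LinearMap.ker (Algebra.trace F A) : Set A).ncard =
      Nat.card F ^ (Module.finrank F A - 1) := by
    rw [← Nat.card_coe_set_eq, SetLike.coe_sort_coe,
      natCard_ker_of_surjective (Algebra.trace_surjective F A), Module.finrank_self]
  rw [← hker, ← ncard_norm_preimage_of_zero_mem (LinearMap.ker (Algebra.trace F A)).zero_mem]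
  rfl

variable (F A B) in
theorem exists_ne_zero_trace_norm_eq_zero (hFA : 2 ≤ Module.finrank F A) :
    ∃ x : B, x ≠ 0 ∧ Algebra.trace F A (Algebra.norm A x) = 0 := by
  have : Finite A := .of_injective _ (algebraMap A B).injective
  have : FiniteDimensional F A := Module.finite_of_finrank_pos (by omega)
  have hlt : Module.finrank F F < Module.finrank F A := by rw [Module.finrank_self]; omega
  obtain ⟨t, ht, ht0⟩ :=
    (Submodule.ne_bot_iff _).1 (LinearMap.ker_ne_bot_of_finrank_lt (f := Algebra.trace F A) hlt)
  obtain ⟨x, rfl⟩ := FiniteField.norm_surjective A B t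
  exact ⟨x, fun hx => ht0 (by rw [hx, Algebra.norm_zero]), ht⟩

theorem trace_norm_smul [Algebra F B] [IsScalarTower F A B] (c : F) (x : B) :
    Algebra.trace F A (Algebra.norm A (c • x)) =
      c ^ Module.finrank A B • Algebra.trace F A (Algebra.norm A x) := by
  rw [← algebraMap_smul A c x, Algebra.smul_def, map_mul, Algebra.norm_algebraMap, ← map_pow,
    ← Algebra.smul_def, map_smul]

theorem span_trace_norm_eq_zero [Algebra F B] [IsScalarTower F A B]
    (hFA : 2 ≤ Module.finrank F A) (hAB : 2 ≤ Module.finrank A B) :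
    Submodule.span F {x : B | Algebra.trace F A (Algebra.norm A x) = 0} = ⊤ := by
  have : Finite A := .of_injective _ (algebraMap A B).injective
  obtain ⟨x₀, hx₀, htr⟩ := exists_ne_zero_trace_norm_eq_zero F A B hFA
  let U : Submonoid B := MonoidHom.mker (Algebra.norm A)
  have hU : Submodule.span F (U : Set B) = ⊤ := by
    rw [← U.closure_eq, ← Algebra.adjoin_eq_span, Algebra.toSubmodule_eq_top]
    exact adjoin_norm_eq_one F A B hAB
  have hmem {u : B} (hu : Algebra.norm A u = 1) :
      Algebra.trace F A (Algebra.norm A (x₀ * u)) = 0 := by rw [map_mul, hu, mul_one, htr]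
  have hle : Submodule.span F (U : Set B) ≤
      (Submodule.span F {x : B | Algebra.trace F A (Algebra.norm A x) = 0}).comap
        (LinearMap.mulLeft F x₀) :=
    Submodule.span_le.2 fun u hu => Submodule.subset_span (hmem hu)
  refine eq_top_iff.2 fun y _ => ?_
  simpa [mul_inv_cancel_left₀ hx₀] using hle (hU ▸ Submodule.mem_top : x₀⁻¹ * y ∈ _)

variable (F A B) in
theorem natCard_lt_choose_two_ncard_trace_norm_eq_zero (hF : Nat.card F = 2)
    (hFA : 2 ≤ Module.finrank F A) (hAB : 2 ≤ Module.finrank A B)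
    (h : 2 < Module.finrank F A ∨ 2 < Module.finrank A B) :
    Nat.card B < {x : B | Algebra.trace F A (Algebra.norm A x) = 0}.ncard.choose 2 := by
  have : Finite A := .of_injective _ (algebraMap A B).injective
  have hcardA : Nat.card A = 2 ^ Module.finrank F A := by
    rw [← hF, ← Module.natCard_eq_pow_finrank]
  have hsucc : 2 * 2 ^ (Module.finrank F A - 1) = 2 ^ Module.finrank F A :=
    mul_pow_sub_one (by omega) 2
  have hpow : 2 ≤ 2 ^ (Module.finrank F A - 1) := Nat.le_self_pow (by omega) 2
  rw [natCard_eq_mul_ncard_norm_eq_one_add_one A B, ncard_trace_norm_eq_zero, hF,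
    show Nat.card A - 1 = 2 * (2 ^ (Module.finrank F A - 1) - 1) + 1 by omega]
  refine lt_choose_two_of_nine_le (by omega) ?_
  rw [ncard_norm_eq_one, hcardA]
  exact nine_le_sum_two_pow hFA hAB h

end TraceNorm

theorem stmt4_general (q r d m n : ℕ) (hr : 2 ≤ r) (hd : 2 ≤ d) (hm : m = d * r)
    (hn : n = (q ^ (r - 1) - 1) * ∑ i ∈ Finset.range d, (q ^ r) ^ i + 1)
    (Fq Fr Fm : Type*) [Field Fq] [Field Fr] [Field Fm]
    [Fintype Fq] [Fintype Fr] [Fintype Fm]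
    [Algebra Fq Fr] [Algebra Fr Fm] [Algebra Fq Fm] [IsScalarTower Fq Fr Fm]
    (hcq : Fintype.card Fq = q) (hcr : Fintype.card Fr = q ^ r)
    (hcm : Fintype.card Fm = q ^ m)
    (g : Fm → Fr)
    (hg : ∀ x : Fm, algebraMap Fr Fm (g x) = x ^ ∑ i ∈ Finset.range d, (q ^ r) ^ i)
    (Cd : Set ({x : Fm // Algebra.trace Fq Fr (g x) = 0} → Fq))
    (hCd : Cd = dualCode (augCode Fq Fm (fun x => Algebra.trace Fq Fr (g x) = 0))) :
    Fintype.card {x : Fm // Algebra.trace Fq Fr (g x) = 0} = n ∧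
    (2 < q → Nat.card Cd = q ^ (n - m - 1) ∧ IsMinDist Cd 3) ∧
    (q = 2 → 2 < r ∨ 2 < d → Nat.card Cd = q ^ (n - m - 1) ∧ IsMinDist Cd 4) := by
  rw [Fintype.card_eq_nat_card] at hcq hcr hcm
  subst hcq hCd
  obtain rfl : r = Module.finrank Fq Fr := (finrank_eq_of_natCard_eq_pow_s4 hcr).symm
  obtain rfl : m = Module.finrank Fq Fm := (finrank_eq_of_natCard_eq_pow_s4 hcm).symm
  obtain rfl : d = Module.finrank Fr Fm := by
    refine (finrank_eq_of_natCard_eq_pow_s4 ?_).symm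
    rw [hcm, hcr, ← pow_mul, hm, mul_comm]
  obtain rfl : g = Algebra.norm Fr := by
    funext x
    apply (algebraMap Fr Fm).injective
    rw [hg, FiniteField.algebraMap_norm_eq_pow_sum, hcr]
  have hlen : {x : Fm | Algebra.trace Fq Fr (Algebra.norm Fr x) = 0}.ncard = n := by
    rw [ncard_trace_norm_eq_zero, ncard_norm_eq_one, hcr, hn]
  have hcard : Fintype.card {x : Fm // Algebra.trace Fq Fr (Algebra.norm Fr x) = 0} = n :=
    Fintype.card_eq_nat_card.trans hlen
  have hzero : Algebra.trace Fq Fr (Algebra.norm Fr (0 : Fm)) = 0 := by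
    rw [Algebra.norm_zero, map_zero]
  have hdim := natCard_dualCode_augCode (F := Fq)
    (P := fun x : Fm => Algebra.trace Fq Fr (Algebra.norm Fr x) = 0) hzero
    (span_trace_norm_eq_zero hr hd)
  rw [hcard] at hdim
  refine ⟨hcard, fun hq => ⟨hdim, ?_⟩, fun hq hrd => ⟨hdim, ?_⟩⟩
  · obtain ⟨x, hx0, hx⟩ := exists_ne_zero_trace_norm_eq_zero Fq Fr Fm hr
    exact isMinDist_dualCode_augCode_three hzero
      (fun c y hy => by rw [trace_norm_smul, hy, smul_zero]) hx hx0 hq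
  · refine isMinDist_dualCode_augCode_four hq ?_
    rw [hcard, ← hlen]
    exact natCard_lt_choose_two_ncard_trace_norm_eq_zero Fq Fr Fm hq hr hd hrd

theorem stmt4 (p a q r m n : ℕ) (hp : p.Prime) (ha : 0 < a) (hqpa : q = p ^ a)
    (hr : 2 ≤ r) (hm : m = 2 * r) (hn : n = q ^ (r - 1) * (q ^ r - q + 1))
    (Fq Fr Fm : Type) [Field Fq] [Field Fr] [Field Fm]
    [Fintype Fq] [Fintype Fr] [Fintype Fm]
    [Algebra Fq Fr] [Algebra Fr Fm] [Algebra Fq Fm] [IsScalarTower Fq Fr Fm]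
    (hcq : Fintype.card Fq = q) (hcr : Fintype.card Fr = q ^ r)
    (hcm : Fintype.card Fm = q ^ m)
    (g : Fm → Fr) (hg : ∀ x : Fm, algebraMap Fr Fm (g x) = x ^ (q ^ r + 1))
    (Cd : Set ({x : Fm // Algebra.trace Fq Fr (g x) = 0} → Fq))
    (hCd : Cd = dualCode (augCode Fq Fm (fun x => Algebra.trace Fq Fr (g x) = 0))) :
    -- the length of the dual code
    Fintype.card {x : Fm // Algebra.trace Fq Fr (g x) = 0} = n ∧
    (2 < q → Nat.card Cd = q ^ (n - m - 1) ∧ IsMinDist Cd 3) ∧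
    (q = 2 → 2 < r → Nat.card Cd = q ^ (n - m - 1) ∧ IsMinDist Cd 4) := by
  have hq : 0 < q := hcq ▸ Fintype.card_pos
  obtain ⟨hlen, hthree, hfour⟩ := stmt4_general q r 2 m n hr le_rfl hm
    (by rw [hn, mul_sub_add_one_eq hq (by omega), Finset.sum_range_succ, Finset.sum_range_one,
      pow_zero, pow_one, add_comm 1]) Fq Fr Fm hcq hcr hcm g
    (by simpa [Finset.sum_range_succ, add_comm] using hg) Cd hCd
  exact ⟨hlen, hthree, fun hq2 hr2 => hfour hq2 (.inl hr2)⟩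
end
end
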